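/- Let L be a finite-dimensional graded maximal subalgebra of Vect_pol(E). Then L_1 = L ∩ Vect_1(E) ≠ 0. -/

import Mathlib

/-!
Write `F ⊆ E` for the space of vectors whose constant field lies in `L`, i.e. `L₋₁`.

If `F ≠ E`, consider the subalgebra of all fields tangent to the linear subspace `F`
(`tangentSubalg`).  It contains `L`: a field `D ∈ L` has `D(0) ∈ F` because `L` is graded, the same
holds for all iterated brackets of `D` with constant fields from `F`, and these are the Taylor
coefficients of `D` along `F` (`valueAt_mem`).  It is proper, since constant fields transverse to
`F` are not tangent to `F`, and infinite-dimensional, since it contains `y q(y) ∂_v` for every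
linear form `y` vanishing on `F`, every polynomial `q` in one variable and every vector `v`.  This
contradicts maximality, so `F = E` (`constPart_eq_top`).

Suppose now that `L₁ = 0`.  Brackets with the constant fields show inductively that `L_p = 0` for
all `p ≥ 1` (`graded_part_eq_bot`), so `L` consists of affine fields and is contained in the proper
subalgebra of projective fields `A + ℓ ℰ` with `A` and `ℓ` affine (`projSubalg`).  By maximality
`L` equals it, but then `x_1 ℰ` is a nonzero element of `L₁`.
-/

open MvPolynomial

/-- The Lie algebra of polynomial vector fields on `E = 𝕜^n`, realized as the
derivations of the polynomial algebra `𝕜[x_1, …, x_n]`. -/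
abbrev Vect (𝕜 : Type*) [Field 𝕜] (n : ℕ) : Type _ :=
  Derivation 𝕜 (MvPolynomial (Fin n) 𝕜) (MvPolynomial (Fin n) 𝕜)

variable (𝕜 : Type*) [Field 𝕜] (n : ℕ)

/-- The Euler vector field `ℰ = Σ x^j ∂_j`. -/
noncomputable def euler : Vect 𝕜 n :=
  MvPolynomial.mkDerivation 𝕜 fun i => MvPolynomial.X i

/-- `Vect_p(E)`: the eigenspace of `ad(ℰ)` for the eigenvalue `p`, i.e. the vector fields
with homogeneous coefficients of degree `p+1`. -/
noncomputable def VectP (p : ℤ) : Submodule 𝕜 (Vect 𝕜 n) :=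
  Module.End.eigenspace (LieAlgebra.ad 𝕜 (Vect 𝕜 n) (euler 𝕜 n)) ((p : 𝕜))

/-- A Lie subalgebra `L` of `Vect_pol(E)` is graded if `L = ⊕_{p ≥ -1} (L ∩ Vect_p(E))`. -/
def IsGradedSubalg (L : LieSubalgebra 𝕜 (Vect 𝕜 n)) : Prop :=
  L.toSubmodule = ⨆ p ≥ (-1 : ℤ), (L.toSubmodule ⊓ VectP 𝕜 n p)

/-- A Lie subalgebra `L` of `Vect_pol(E)` is maximal if the only subalgebras containing it
are `L` itself and `Vect_pol(E)`. -/
def IsMaxSubalg (L : LieSubalgebra 𝕜 (Vect 𝕜 n)) : Prop :=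
  ∀ L' : LieSubalgebra 𝕜 (Vect 𝕜 n), L ≤ L' → L' = L ∨ L' = ⊤

section

variable {𝕜 : Type*} [Field 𝕜] {n : ℕ}

/-! ### The Euler field and the grading -/

lemma coeff_euler (f : MvPolynomial (Fin n) 𝕜) (m : Fin n →₀ ℕ) :
    coeff m (euler 𝕜 n f) = (m.degree : 𝕜) * coeff m f := by
  have key : ∀ (s : Fin n →₀ ℕ) (a : 𝕜),
      euler 𝕜 n (monomial s a) = (s.degree : 𝕜) • monomial s a := by
    intro s a
    have h := (isHomogeneous_monomial (n := s.degree) (d := s) a rfl).sum_X_mul_pderiv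
    rw [← Nat.cast_smul_eq_nsmul 𝕜] at h
    rw [← h]
    have hsum : ∀ f, (∑ i : Fin n, (X i : MvPolynomial (Fin n) 𝕜) • pderiv i : Vect 𝕜 n) f =
        ∑ i : Fin n, X i * pderiv i f := fun f => by
      rw [← Derivation.coeFnAddMonoidHom_apply, map_sum, Finset.sum_apply]; rfl
    have : euler 𝕜 n = ∑ i : Fin n, (X i : MvPolynomial (Fin n) 𝕜) • pderiv i := by
      refine derivation_ext fun i => ?_
      rw [euler, mkDerivation_X, hsum]
      simp [pderiv_X, Pi.single_apply]
    rw [this, hsum]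
  induction f using MvPolynomial.induction_on' with
  | monomial s a =>
    rw [key, coeff_smul, coeff_monomial]
    split_ifs with h <;> simp [h]
  | add p q hp hq => simp [hp, hq, mul_add]

lemma euler_X (i : Fin n) : euler 𝕜 n (X i) = X i := mkDerivation_X _ _ _

lemma mem_VectP {p : ℤ} {D : Vect 𝕜 n} :
    D ∈ VectP 𝕜 n p ↔ ∀ i, euler 𝕜 n (D (X i)) = ((p : 𝕜) + 1) • D (X i) := by
  rw [VectP, Module.End.mem_eigenspace_iff, LieAlgebra.ad_apply]
  constructor
  · intro h i
    have := DFunLike.congr_fun h (X i)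
    rw [Derivation.commutator_apply, euler_X, Derivation.smul_apply] at this
    rw [add_smul, one_smul, ← this]; ring
  · intro h
    refine derivation_ext fun i => ?_
    rw [Derivation.commutator_apply, euler_X, Derivation.smul_apply, h i, add_smul, one_smul]
    ring

/-- The coefficients of a field in `Vect_p` are homogeneous of degree `p + 1`. -/
lemma degree_of_mem_VectP [CharZero 𝕜] {p : ℤ} {D : Vect 𝕜 n} (hD : D ∈ VectP 𝕜 n p)
    {i : Fin n} {m : Fin n →₀ ℕ} (hm : coeff m (D (X i)) ≠ 0) : (m.degree : ℤ) = p + 1 := by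
  have h := congrArg (coeff m) (mem_VectP.1 hD i)
  rw [coeff_euler, coeff_smul, smul_eq_mul] at h
  have := mul_right_cancel₀ hm h
  exact_mod_cast this

/-! ### Constant fields and restriction to lines -/

/-- The constant vector field with value `v`, i.e. the directional derivative along `v`. -/
noncomputable def constField (v : Fin n → 𝕜) : Vect 𝕜 n := mkDerivation 𝕜 fun i => C (v i)

lemma constField_X (v : Fin n → 𝕜) (i : Fin n) : constField v (X i) = C (v i) :=
  mkDerivation_X _ _ _

/-- The value at the point `p` of the vector field `D`. -/
noncomputable def valueAt (D : Vect 𝕜 n) (p : Fin n → 𝕜) : Fin n → 𝕜 :=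
  fun i => eval p (D (X i))

lemma eval_derivation (D : Vect 𝕜 n) (p : Fin n → 𝕜) (f : MvPolynomial (Fin n) 𝕜) :
    eval p (D f) = eval p (constField (valueAt D p) f) := by
  induction f using MvPolynomial.induction_on with
  | C a => simp
  | add f g hf hg => simp [hf, hg]
  | mul_X f i hf => simp [Derivation.leibniz, hf, constField_X, valueAt]

/-- Restriction of a polynomial to the parametrized line `t ↦ p + t v`. -/
noncomputable def line (p v : Fin n → 𝕜) : MvPolynomial (Fin n) 𝕜 →ₐ[𝕜] Polynomial 𝕜 :=
  aeval fun i => Polynomial.C (p i) + Polynomial.C (v i) * Polynomial.X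

lemma line_X (p v : Fin n → 𝕜) (i : Fin n) :
    line p v (X i) = Polynomial.C (p i) + Polynomial.C (v i) * Polynomial.X := aeval_X _ _

lemma line_C (p v : Fin n → 𝕜) (a : 𝕜) : line p v (C a) = Polynomial.C a := aeval_C _ _

lemma eval_line (p v : Fin n → 𝕜) (f : MvPolynomial (Fin n) 𝕜) (t : 𝕜) :
    (line p v f).eval t = eval (p + t • v) f := by
  induction f using MvPolynomial.induction_on with
  | C a => simp
  | add f g hf hg => simp [hf, hg]
  | mul_X f i hf => simp [hf, line_X, mul_comm t]

lemma line_constField (p v : Fin n → 𝕜) (f : MvPolynomial (Fin n) 𝕜) :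
    line p v (constField v f) = Polynomial.derivative (line p v f) := by
  induction f using MvPolynomial.induction_on with
  | C a => simp
  | add f g hf hg => simp [hf, hg]
  | mul_X f i hf =>
    simp [Derivation.leibniz, hf, line_X, constField_X]; ring

/-- A polynomial vanishing on a subspace has zero derivative along it. -/
lemma eval_constField_eq_zero [CharZero 𝕜] (F : Submodule 𝕜 (Fin n → 𝕜))
    {f : MvPolynomial (Fin n) 𝕜} (hf : ∀ p ∈ F, eval p f = 0) {p v : Fin n → 𝕜}
    (hp : p ∈ F) (hv : v ∈ F) : eval p (constField v f) = 0 := by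
  have h0 : line p v f = 0 := Polynomial.funext fun t => by
    rw [eval_line, Polynomial.eval_zero]
    exact hf _ (F.add_mem hp (F.smul_mem t hv))
  have h := eval_line p v (constField v f) 0
  rw [line_constField, h0] at h
  simpa using h.symm

/-- Taylor's formula at the origin: a polynomial whose iterated derivatives along `p` all
vanish at `0` vanishes at `p`. -/
lemma eval_eq_zero_of_iterate [CharZero 𝕜] (f : MvPolynomial (Fin n) 𝕜) (p : Fin n → 𝕜)
    (h : ∀ k : ℕ, eval 0 ((constField p)^[k] f) = 0) : eval p f = 0 := by
  have hit : ∀ k : ℕ, line 0 p ((constField p)^[k] f) =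
      Polynomial.derivative^[k] (line 0 p f) := by
    intro k
    induction k with
    | zero => rfl
    | succ k ih => rw [Function.iterate_succ_apply', Function.iterate_succ_apply',
        line_constField, ih]
  have h0 : line 0 p f = 0 := by
    ext k
    have h1 := eval_line 0 p ((constField p)^[k] f) 0
    rw [hit, zero_smul, add_zero, h k, ← Polynomial.coeff_zero_eq_eval_zero,
      Polynomial.coeff_iterate_derivative, zero_add, Nat.descFactorial_self] at h1
    rw [nsmul_eq_mul] at h1
    simpa [Nat.factorial_ne_zero] using h1
  have h1 := eval_line 0 p f 1
  rw [h0] at h1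
  simpa using h1.symm

/-- The linear form `φ` as a polynomial. -/
noncomputable def linForm (φ : (Fin n → 𝕜) →ₗ[𝕜] 𝕜) : MvPolynomial (Fin n) 𝕜 :=
  ∑ i, C (φ (Pi.single i 1)) * X i

lemma apply_eq_sum_single (φ : (Fin n → 𝕜) →ₗ[𝕜] 𝕜) (v : Fin n → 𝕜) :
    φ v = ∑ i, φ (Pi.single i 1) * v i := by
  conv_lhs => rw [← LinearMap.sum_single_apply (φ := fun _ => 𝕜) v]
  rw [map_sum]
  refine Finset.sum_congr rfl fun i _ => ?_
  have : (Pi.single i (v i) : Fin n → 𝕜) = v i • Pi.single i 1 := by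
    rw [← Pi.single_smul]; simp
  rw [this, map_smul, smul_eq_mul, mul_comm]

lemma eval_linForm (φ : (Fin n → 𝕜) →ₗ[𝕜] 𝕜) (v : Fin n → 𝕜) :
    eval v (linForm φ) = φ v := by
  rw [apply_eq_sum_single, linForm]; simp

lemma eval_apply_linForm (φ : (Fin n → 𝕜) →ₗ[𝕜] 𝕜) (D : Vect 𝕜 n) (p : Fin n → 𝕜) :
    eval p (D (linForm φ)) = φ (valueAt D p) := by
  rw [apply_eq_sum_single, linForm]; simp [valueAt]

lemma constField_linForm (φ : (Fin n → 𝕜) →ₗ[𝕜] 𝕜) (v : Fin n → 𝕜) :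
    constField v (linForm φ) = C (φ v) := by
  rw [apply_eq_sum_single, linForm]; simp [constField_X]

/-! ### Constant fields in a graded subalgebra -/

/-- The subspace `L₋₁` of `E`: the vectors whose constant field lies in `L`. -/
noncomputable def constPart (L : LieSubalgebra 𝕜 (Vect 𝕜 n)) : Submodule 𝕜 (Fin n → 𝕜) where
  carrier := {v | constField v ∈ L}
  add_mem' {v w} hv hw := by
    have : constField (v + w) = constField v + constField w :=
      derivation_ext fun i => by simp [constField_X]
    simpa [this] using L.add_mem hv hw
  zero_mem' := by
    have : constField (0 : Fin n → 𝕜) = 0 := derivation_ext fun i => by simp [constField_X]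
    simp [this]
  smul_mem' c v hv := by
    have : constField (c • v) = c • constField v :=
      derivation_ext fun i => by simp [constField_X, smul_eq_C_mul]
    simpa [this] using L.smul_mem c hv

lemma valueAt_zero_mem [CharZero 𝕜] {L : LieSubalgebra 𝕜 (Vect 𝕜 n)}
    (hL : IsGradedSubalg 𝕜 n L) {D : Vect 𝕜 n} (hD : D ∈ L) : valueAt D 0 ∈ constPart L := by
  let ev : Vect 𝕜 n →ₗ[𝕜] (Fin n → 𝕜) :=
    { toFun := fun D => valueAt D 0
      map_add' := fun D D' => by ext i; simp [valueAt]
      map_smul' := fun c D => by ext i; simp [valueAt] }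
  suffices h : L.toSubmodule ≤ (constPart L).comap ev from h hD
  rw [hL]
  refine iSup₂_le fun p hp D hD => ?_
  obtain ⟨hDL, hDp⟩ := hD
  change valueAt D 0 ∈ constPart L
  rcases hp.lt_or_eq with hp | rfl
  · have : valueAt D 0 = 0 := by
      ext i
      by_contra h
      have h' : coeff 0 (D (X i)) ≠ 0 := by
        rwa [← constantCoeff_eq, ← eval_zero]
      have := degree_of_mem_VectP hDp h'
      simp at this
      omega
    rw [this]; exact zero_mem _
  · have : constField (valueAt D 0) = D := by
      refine derivation_ext fun i => ?_
      rw [constField_X]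
      ext m
      rw [coeff_C]
      split_ifs with hm
      · rw [← hm, ← constantCoeff_eq, ← eval_zero]; rfl
      · by_contra h
        have := degree_of_mem_VectP hDp (Ne.symm h)
        simp at this
        exact hm ((Finsupp.degree_eq_zero_iff m).1 this).symm
    change constField (valueAt D 0) ∈ L
    rwa [this]

/-- Fields in `L` are tangent to the subspace `L₋₁`, by Taylor expansion along `L₋₁`. -/
lemma valueAt_mem [CharZero 𝕜] {L : LieSubalgebra 𝕜 (Vect 𝕜 n)}
    (hL : IsGradedSubalg 𝕜 n L) {D : Vect 𝕜 n} (hD : D ∈ L) {p : Fin n → 𝕜}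
    (hp : p ∈ constPart L) : valueAt D p ∈ constPart L := by
  by_contra hn
  obtain ⟨φ, hφ, hle⟩ := Submodule.exists_le_ker_of_notMem hn
  apply hφ
  rw [← eval_apply_linForm]
  apply eval_eq_zero_of_iterate
  have key : ∀ k : ℕ, ∃ D' ∈ L, (constField p)^[k] (D (linForm φ)) = D' (linForm φ) := by
    intro k
    induction k with
    | zero => exact ⟨D, hD, rfl⟩
    | succ k ih =>
      obtain ⟨D', hD', h⟩ := ih
      refine ⟨⁅constField p, D'⁆, L.lie_mem hp hD', ?_⟩
      rw [Function.iterate_succ_apply', h, Derivation.commutator_apply, constField_linForm]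
      simp
  intro k
  obtain ⟨D', hD', h⟩ := key k
  rw [h, eval_apply_linForm]
  exact hle (valueAt_zero_mem hL hD')

/-- The subalgebra of fields tangent to the subspace `F`, i.e. those preserving the vanishing
ideal of `F`. -/
noncomputable def tangentSubalg (F : Submodule 𝕜 (Fin n → 𝕜)) : LieSubalgebra 𝕜 (Vect 𝕜 n) where
  carrier := {D | ∀ f : MvPolynomial (Fin n) 𝕜, (∀ p ∈ F, eval p f = 0) →
    ∀ p ∈ F, eval p (D f) = 0}
  add_mem' {D D'} h h' f hf p hp := by simp [h f hf p hp, h' f hf p hp]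
  zero_mem' f hf p hp := by simp
  smul_mem' c D h f hf p hp := by simp [h f hf p hp]
  lie_mem' {D D'} h h' f hf p hp := by
    rw [Derivation.commutator_apply, map_sub, h _ (h' f hf) p hp, h' _ (h f hf) p hp, sub_zero]

/-- A finite-dimensional graded maximal subalgebra contains all constant fields: otherwise the
fields tangent to `L₋₁` form a proper infinite-dimensional subalgebra containing it. -/
lemma constPart_eq_top [CharZero 𝕜] {L : LieSubalgebra 𝕜 (Vect 𝕜 n)} [FiniteDimensional 𝕜 L]
    (hL : IsGradedSubalg 𝕜 n L) (hmax : IsMaxSubalg 𝕜 n L) : constPart L = ⊤ := by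
  by_contra hF
  obtain ⟨v, hv⟩ : ∃ v, v ∉ constPart L := by
    by_contra! h
    exact hF (eq_top_iff.2 fun v _ => h v)
  obtain ⟨φ, hφ, hle⟩ := Submodule.exists_le_ker_of_notMem hv
  have hy : ∀ p ∈ constPart L, eval p (linForm φ) = 0 := fun p hp => by
    rw [eval_linForm]; exact hle hp
  have hLT : L ≤ tangentSubalg (constPart L) := fun D hD f hf p hp => by
    rw [eval_derivation]
    exact eval_constField_eq_zero _ hf hp (valueAt_mem hL hD hp)
  rcases hmax _ hLT with h | h
  · -- `q ↦ y q(y) ∂_v` embeds the polynomials in one variable into `L`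
    let y := linForm φ
    let T : Polynomial 𝕜 →ₗ[𝕜] Vect 𝕜 n :=
      { toFun := fun q => (y * Polynomial.aeval y q) • constField v
        map_add' := fun q r => by rw [map_add, mul_add, add_smul]
        map_smul' := fun c q => by
          rw [map_smul, mul_smul_comm, smul_assoc, RingHom.id_apply] }
    have hT : ∀ q, T q ∈ L.toSubmodule := fun q => by
      change T q ∈ L
      rw [← h]
      intro f hf p hp
      change eval p ((y * Polynomial.aeval y q) • constField v f) = 0
      rw [smul_eq_mul, map_mul, map_mul, hy p hp, zero_mul, zero_mul]
    have hinj : Function.Injective (T.codRestrict L.toSubmodule hT) := by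
      rw [← LinearMap.ker_eq_bot, LinearMap.ker_codRestrict, LinearMap.ker_eq_bot']
      intro q hq
      have h1 := congrArg (line 0 v) (DFunLike.congr_fun hq y)
      change line 0 v ((y * Polynomial.aeval y q) • constField v y) = line 0 v 0 at h1
      rw [constField_linForm, smul_eq_mul, map_mul, map_mul, line_C, map_zero,
        ← Polynomial.aeval_algHom_apply] at h1
      have hly : line 0 v y = Polynomial.C (φ v) * Polynomial.X := by
        rw [apply_eq_sum_single]
        simp [y, linForm, line_X, Finset.sum_mul, mul_assoc]
      rw [hly] at h1
      have h2 : Polynomial.aeval (Polynomial.C (φ v) * Polynomial.X) q = 0 := by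
        simpa [hφ] using h1
      have h3 : q.comp (Polynomial.C (φ v) * Polynomial.X) = 0 := h2
      ext k
      have h4 := congrArg (fun r => Polynomial.coeff r k) h3
      simpa [Polynomial.comp_C_mul_X_coeff, hφ] using h4
    have : Module.Finite 𝕜 L.toSubmodule := ‹_›
    exact Polynomial.not_finite (R := 𝕜) (Module.Finite.of_injective _ hinj)
  · have h1 : constField v ∈ tangentSubalg (constPart L) := by rw [h]; trivial
    have h2 := h1 _ hy 0 (zero_mem _)
    rw [constField_linForm, eval_C] at h2
    exact hφ h2

/-! ### The affine and projective subalgebras -/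

/-- Polynomials of degree at most one. -/
noncomputable def affPoly (𝕜 : Type*) [Field 𝕜] (n : ℕ) :
    Submodule 𝕜 (MvPolynomial (Fin n) 𝕜) where
  carrier := {f | ∀ m : Fin n →₀ ℕ, 2 ≤ m.degree → coeff m f = 0}
  add_mem' hf hg m hm := by rw [coeff_add, hf m hm, hg m hm, add_zero]
  zero_mem' m hm := coeff_zero m
  smul_mem' c f hf m hm := by rw [coeff_smul, hf m hm, smul_zero]

lemma C_mem_affPoly (a : 𝕜) : C a ∈ affPoly 𝕜 n := fun m hm => by
  rw [coeff_C, if_neg]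
  rintro rfl
  simp at hm

lemma X_mem_affPoly (i : Fin n) : X i ∈ affPoly 𝕜 n := fun m hm => by
  rw [coeff_X, if_neg]
  rintro rfl
  simp at hm

lemma C_mul_mem_affPoly {f : MvPolynomial (Fin n) 𝕜} (a : 𝕜) (hf : f ∈ affPoly 𝕜 n) :
    C a * f ∈ affPoly 𝕜 n := by
  rw [← smul_eq_C_mul]; exact (affPoly 𝕜 n).smul_mem a hf

lemma euler_affPoly {f : MvPolynomial (Fin n) 𝕜} (hf : f ∈ affPoly 𝕜 n) :
    euler 𝕜 n f = f - C (coeff 0 f) := by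
  ext m
  rw [coeff_euler, coeff_sub, coeff_C]
  rcases Nat.lt_or_ge m.degree 2 with h | h
  · split_ifs with h0
    · subst h0; simp
    · have h1 : m.degree ≠ 0 := fun h => h0 ((Finsupp.degree_eq_zero_iff m).1 h).symm
      have h2 : m.degree = 1 := by omega
      simp [h2]
  · rw [hf m h, if_neg]
    · simp
    · rintro rfl
      simp at h

/-- The Lie algebra of affine vector fields. -/
noncomputable def affSubalg (𝕜 : Type*) [Field 𝕜] (n : ℕ) : LieSubalgebra 𝕜 (Vect 𝕜 n) where
  carrier := {D | ∀ f ∈ affPoly 𝕜 n, D f ∈ affPoly 𝕜 n}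
  add_mem' h h' f hf := (affPoly 𝕜 n).add_mem (h f hf) (h' f hf)
  zero_mem' _ _ := (affPoly 𝕜 n).zero_mem
  smul_mem' c _ h f hf := (affPoly 𝕜 n).smul_mem c (h f hf)
  lie_mem' h h' f hf := (affPoly 𝕜 n).sub_mem (h _ (h' f hf)) (h' _ (h f hf))

lemma mem_affSubalg {D : Vect 𝕜 n} (h : ∀ i, D (X i) ∈ affPoly 𝕜 n) : D ∈ affSubalg 𝕜 n := by
  intro f hf
  rw [f.as_sum, map_sum]
  refine Submodule.sum_mem _ fun m hm => ?_
  have hdeg : m.degree < 2 := by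
    by_contra hd
    exact (mem_support_iff.1 hm) (hf m (not_lt.1 hd))
  have h01 : m.degree = 0 ∨ m.degree = 1 := by omega
  rcases h01 with h0 | h1
  · rw [(Finsupp.degree_eq_zero_iff m).1 h0]
    change D (C _) ∈ _
    rw [derivation_C]
    exact zero_mem _
  · obtain ⟨i, rfl⟩ := (Finsupp.sum_eq_one_iff m).1 h1
    rw [← C_mul_X_eq_monomial, ← smul_eq_C_mul, Derivation.map_smul]
    exact (affPoly 𝕜 n).smul_mem _ (h i)

lemma smul_lie_euler_mem {A : Vect 𝕜 n} (hA : A ∈ affSubalg 𝕜 n) {f : MvPolynomial (Fin n) 𝕜}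
    (hf : f ∈ affPoly 𝕜 n) : f • ⁅A, euler 𝕜 n⁆ ∈ affSubalg 𝕜 n := by
  refine mem_affSubalg fun i => ?_
  rw [Derivation.smul_apply, Derivation.commutator_apply, euler_X,
    euler_affPoly (hA _ (X_mem_affPoly i)), sub_sub_cancel, smul_eq_mul, mul_comm]
  exact C_mul_mem_affPoly _ hf

/-- The Lie algebra of infinitesimal projective transformations: sums of an affine field and a
field `ℓ ℰ`.  Here `ℓ` may be affine rather than linear, since `ℰ` itself is affine. -/
noncomputable def projSubalg (𝕜 : Type*) [Field 𝕜] (n : ℕ) : LieSubalgebra 𝕜 (Vect 𝕜 n) where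
  carrier := {D | ∃ f ∈ affPoly 𝕜 n, ∃ A ∈ affSubalg 𝕜 n, D = A + f • euler 𝕜 n}
  add_mem' := by
    rintro _ _ ⟨f, hf, A, hA, rfl⟩ ⟨g, hg, B, hB, rfl⟩
    refine ⟨f + g, add_mem hf hg, A + B, add_mem hA hB, ?_⟩
    rw [add_smul]; abel
  zero_mem' := ⟨0, zero_mem _, 0, zero_mem _, by simp⟩
  smul_mem' := by
    rintro c _ ⟨f, hf, A, hA, rfl⟩
    exact ⟨c • f, (affPoly 𝕜 n).smul_mem c hf, c • A, (affSubalg 𝕜 n).smul_mem c hA, by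
      rw [smul_add, smul_assoc]⟩
  lie_mem' := by
    rintro _ _ ⟨f, hf, A, hA, rfl⟩ ⟨g, hg, B, hB, rfl⟩
    refine ⟨A g - B f + (C (coeff 0 f) * g - C (coeff 0 g) * f),
      add_mem (sub_mem (hA g hg) (hB f hf))
        (sub_mem (C_mul_mem_affPoly _ hg) (C_mul_mem_affPoly _ hf)),
      ⁅A, B⁆ + g • ⁅A, euler 𝕜 n⁆ - f • ⁅B, euler 𝕜 n⁆,
      sub_mem (add_mem ((affSubalg 𝕜 n).lie_mem hA hB) (smul_lie_euler_mem hA hg))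
        (smul_lie_euler_mem hB hf), ?_⟩
    refine derivation_ext fun i => ?_
    simp only [Derivation.commutator_apply, Derivation.add_apply, Derivation.sub_apply,
      Derivation.smul_apply, smul_eq_mul, euler_X, map_add, Derivation.leibniz,
      euler_affPoly hf, euler_affPoly hg]
    ring

/-- The field `x_i² ℰ` is not projective. -/
lemma projSubalg_ne_top (hn : 0 < n) : projSubalg 𝕜 n ≠ ⊤ := by
  intro h
  let i : Fin n := ⟨0, hn⟩
  have hmem : (X i ^ 2 : MvPolynomial (Fin n) 𝕜) • euler 𝕜 n ∈ projSubalg 𝕜 n := by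
    rw [h]; trivial
  obtain ⟨f, hf, A, hA, hD⟩ := hmem
  have h1 := DFunLike.congr_fun hD (X i)
  simp only [Derivation.add_apply, Derivation.smul_apply, smul_eq_mul, euler_X] at h1
  have h2 := congrArg (coeff (Finsupp.single i 2 + Finsupp.single i 1)) h1
  rw [coeff_add, coeff_mul_X, coeff_mul_X, hf _ (by simp),
    hA _ (X_mem_affPoly i) _ (by simp), coeff_X_pow] at h2
  simp at h2

/-- If `L` contains the constant fields and `L₁ = 0`, then `L_p = 0` for all `p ≥ 1`, as
bracketing with constant fields lowers the degree and kills only constant fields. -/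
lemma graded_part_eq_bot [CharZero 𝕜] {L : LieSubalgebra 𝕜 (Vect 𝕜 n)}
    (hF : constPart L = ⊤) (h1 : L.toSubmodule ⊓ VectP 𝕜 n 1 = ⊥) (k : ℕ) :
    L.toSubmodule ⊓ VectP 𝕜 n ((k : ℤ) + 1) = ⊥ := by
  induction k with
  | zero => simpa using h1
  | succ k ih =>
    rw [eq_bot_iff]
    rintro D ⟨hDL, hDp⟩
    have hlie : ∀ v : Fin n → 𝕜, ⁅constField v, D⁆ = 0 := by
      intro v
      have hv : constField v ∈ L := by
        have : v ∈ constPart L := by rw [hF]; trivial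
        exact this
      have hmem : ⁅constField v, D⁆ ∈ L.toSubmodule ⊓ VectP 𝕜 n ((k : ℤ) + 1) := by
        refine ⟨L.lie_mem hv hDL, ?_⟩
        have hE : ⁅euler 𝕜 n, constField v⁆ = -constField v :=
          derivation_ext fun i => by
            rw [Derivation.commutator_apply, constField_X, euler_X]
            simp [constField_X]
        refine mem_VectP.2 fun i => ?_
        have hg := DFunLike.congr_fun hE (D (X i))
        rw [Derivation.commutator_apply, mem_VectP.1 hDp i, Derivation.map_smul,
          Derivation.neg_apply, sub_eq_iff_eq_add] at hg
        rw [Derivation.commutator_apply, constField_X, derivation_C, sub_zero, hg]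
        push_cast
        module
      rw [ih] at hmem
      exact (Submodule.mem_bot 𝕜).1 hmem
    rw [Submodule.mem_bot]
    refine derivation_ext fun i => ?_
    have hconst : ∀ p, eval p (euler 𝕜 n (D (X i))) = 0 := by
      intro p
      have h := DFunLike.congr_fun (hlie (valueAt (euler 𝕜 n) p)) (X i)
      rw [Derivation.commutator_apply, constField_X, derivation_C, sub_zero] at h
      rw [eval_derivation, h]
      simp
    have hz : euler 𝕜 n (D (X i)) = 0 := MvPolynomial.funext fun p => by
      rw [hconst p, map_zero]
    have hev := mem_VectP.1 hDp i
    rw [hz] at hev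
    have hne : ((((k + 1 : ℕ) : ℤ) + 1 : ℤ) : 𝕜) + 1 ≠ 0 := by
      push_cast
      exact_mod_cast Nat.succ_ne_zero (k + 1 + 1)
    rw [Derivation.zero_apply]
    exact (smul_eq_zero.1 hev.symm).resolve_left hne

lemma le_projSubalg [CharZero 𝕜] {L : LieSubalgebra 𝕜 (Vect 𝕜 n)}
    (hL : IsGradedSubalg 𝕜 n L) (hF : constPart L = ⊤)
    (h1 : L.toSubmodule ⊓ VectP 𝕜 n 1 = ⊥) : L ≤ projSubalg 𝕜 n := by
  suffices h : L.toSubmodule ≤ (projSubalg 𝕜 n).toSubmodule from h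
  rw [hL]
  refine iSup₂_le fun p hp => ?_
  rcases le_or_gt p 0 with hp0 | hp0
  · rintro D ⟨-, hD⟩
    refine ⟨0, zero_mem _, D, mem_affSubalg fun i m hm => ?_, by simp⟩
    by_contra hne
    have := degree_of_mem_VectP hD hne
    omega
  · obtain ⟨k, rfl⟩ : ∃ k : ℕ, p = (k : ℤ) + 1 := ⟨(p - 1).toNat, by omega⟩
    rw [graded_part_eq_bot hF h1]
    exact bot_le

end

/-- Let `L` be a finite-dimensional graded maximal subalgebra of `Vect_pol(E)`.  Then
`L₁ = L ∩ Vect₁(E) ≠ 0`. -/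
theorem statement7 (𝕜 : Type) [RCLike 𝕜] (n : ℕ) (hn : 0 < n)
    (L : LieSubalgebra 𝕜 (Vect 𝕜 n)) (hfd : FiniteDimensional 𝕜 L)
    (hgraded : IsGradedSubalg 𝕜 n L) (hmax : IsMaxSubalg 𝕜 n L) :
    L.toSubmodule ⊓ VectP 𝕜 n 1 ≠ ⊥ := by
  have hF := constPart_eq_top hgraded hmax
  intro h1
  rcases hmax _ (le_projSubalg hgraded hF h1) with h | h
  · -- then `x_i ℰ` is a nonzero element of `L₁`
    let i : Fin n := ⟨0, hn⟩
    have hmem : (X i : MvPolynomial (Fin n) 𝕜) • euler 𝕜 n ∈ L.toSubmodule ⊓ VectP 𝕜 n 1 := by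
      constructor
      · change _ ∈ L
        rw [← h]
        exact ⟨X i, X_mem_affPoly i, 0, zero_mem _, by simp⟩
      · refine mem_VectP.2 fun j => ?_
        rw [Derivation.smul_apply, smul_eq_mul, Derivation.leibniz,
          smul_eq_mul, smul_eq_mul, smul_eq_C_mul]
        simp only [euler_X, Int.cast_one, map_add, map_one]
        ring
    rw [h1, Submodule.mem_bot] at hmem
    have h2 := DFunLike.congr_fun hmem (X i)
    rw [Derivation.smul_apply, euler_X, smul_eq_mul, Derivation.zero_apply] at h2
    exact mul_ne_zero (X_ne_zero i) (X_ne_zero i) h2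
  · exact projSubalg_ne_top hn h
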